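/- arXiv:1808.01670 — 2 statements merged into one kernel-verified Lean document; each statement's English description precedes it below -/
import Mathlib

section
/- (Residuation) In a lattice effect algebra E, the Sasaki product is a residuated map whose residual is the Sasaki arrow: for all a,b,c ∈ E, a⊗c ≤ b if and only if c ≤ a→ₛb. -/
/-- A lattice effect algebra: an effect algebra (partial operation encoded by a
definedness predicate `D` and a total function `add` whose value is only
meaningful on `D`) whose induced order `a ≤ b ↔ ∃ c, a⊕c = b` is a lattice;
the carrier's lattice order is required to coincide with the induced order. -/
structure LatticeEffectAlgebra (E : Type*) [Lattice E] [BoundedOrder E] where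
  D : E → E → Prop
  add : E → E → E
  comm : ∀ a b : E, D a b → (D b a ∧ add a b = add b a)
  assoc : ∀ a b c : E, D b c → D a (add b c) →
    (D a b ∧ D (add a b) c ∧ add a (add b c) = add (add a b) c)
  inv : E → E
  D_inv : ∀ a : E, D a (inv a)
  add_inv : ∀ a : E, add a (inv a) = ⊤
  inv_unique : ∀ a b : E, D a b → add a b = ⊤ → b = inv a
  D_top : ∀ a : E, D a ⊤ → a = ⊥
  le_iff : ∀ a b : E, a ≤ b ↔ ∃ c, D a c ∧ add a c = b

variable {E : Type*} [Lattice E] [BoundedOrder E]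

/-- Sasaki product: a⊗b = (a'⊕(a∧b'))'. -/
def LatticeEffectAlgebra.sprod (A : LatticeEffectAlgebra E) (a b : E) : E :=
  A.inv (A.add (A.inv a) (a ⊓ A.inv b))

/-- Sasaki arrow: a→ₛb = a'⊕(a∧b). -/
def LatticeEffectAlgebra.sarrow (A : LatticeEffectAlgebra E) (a b : E) : E :=
  A.add (A.inv a) (a ⊓ b)

/-!
Write `a'` for `inv a`. On `[⊥, a]` the map `x ↦ a' ⊕ x` is an order embedding. It sends `a ⊗ c`,
which lies below `a`, to `a' ⊔ c`, and `a ⊓ b` to `a →ₛ b`. Hence `a ⊗ c ≤ b` is equivalent to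
`a ⊗ c ≤ a ⊓ b`, then to `a' ⊔ c ≤ a →ₛ b`, and finally to `c ≤ a →ₛ b`, because `a' ≤ a →ₛ b`.
-/

namespace LatticeEffectAlgebra

variable (A : LatticeEffectAlgebra E) {a b c : E}

theorem D_symm (h : A.D a b) : A.D b a :=
  (A.comm a b h).1

protected theorem add_comm (h : A.D a b) : A.add a b = A.add b a :=
  (A.comm a b h).2

protected theorem inv_inv (a : E) : A.inv (A.inv a) = a := by
  have h : A.add (A.inv a) a = ⊤ := by rw [← A.add_comm (A.D_inv a), A.add_inv]
  exact (A.inv_unique _ _ (A.D_symm (A.D_inv a)) h).symm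

theorem le_add_right (h : A.D a b) : a ≤ A.add a b :=
  (A.le_iff _ _).2 ⟨b, h, rfl⟩

theorem D_inv_add (h : A.D a b) : A.D a (A.inv (A.add a b)) :=
  A.D_symm (A.assoc _ _ _ h (A.D_symm (A.D_inv _))).1

theorem add_inv_add (h : A.D a b) : A.add a (A.inv (A.add a b)) = A.inv b := by
  have hs := A.D_inv (A.add a b)
  obtain ⟨-, hD, hassoc⟩ := A.assoc _ _ _ h (A.D_symm hs)
  have htop : A.add b (A.add (A.inv (A.add a b)) a) = ⊤ := by
    rw [← A.add_comm hD, ← hassoc, ← A.add_comm hs, A.add_inv]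
  rw [A.add_comm (A.D_inv_add h)]
  exact A.inv_unique _ _ (A.D_symm hD) htop

theorem D_inv_left_of_le (h : b ≤ a) : A.D (A.inv a) b := by
  obtain ⟨c, hbc, rfl⟩ := (A.le_iff _ _).1 h
  exact A.D_symm (A.D_inv_add hbc)

theorem inv_antitone : Antitone A.inv := by
  intro a b h
  obtain ⟨c, hac, rfl⟩ := (A.le_iff _ _).1 h
  have hca := A.D_symm hac
  rw [A.add_comm hac, ← A.add_inv_add hca, A.add_comm (A.D_inv_add hca)]
  exact A.le_add_right (A.D_symm (A.D_inv_add hca))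

protected theorem inv_le_inv_iff : A.inv a ≤ A.inv b ↔ b ≤ a :=
  ⟨fun h => by simpa only [A.inv_inv] using A.inv_antitone h, fun h => A.inv_antitone h⟩

/-- The orthosupplement as an order isomorphism onto the order dual, so that
De Morgan's law is an instance of `OrderIso.map_inf`. -/
def invOrderIso : E ≃o Eᵒᵈ where
  toFun a := OrderDual.toDual (A.inv a)
  invFun a := A.inv (OrderDual.ofDual a)
  left_inv := A.inv_inv
  right_inv := A.inv_inv
  map_rel_iff' := A.inv_le_inv_iff

theorem inv_inf (a b : E) : A.inv (a ⊓ b) = A.inv a ⊔ A.inv b :=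
  A.invOrderIso.map_inf a b

protected theorem add_le_add_left (hac : A.D a c) (h : b ≤ c) : A.add a b ≤ A.add a c := by
  obtain ⟨d, hbd, rfl⟩ := (A.le_iff _ _).1 h
  obtain ⟨-, hD, hassoc⟩ := A.assoc _ _ _ hbd hac
  exact hassoc ▸ A.le_add_right hD

/- Adding `a` to the orthosupplements of both sums recovers `inv b` and `inv c`, so monotonicity
already gives cancellation. -/
protected theorem add_le_add_iff_left (hab : A.D a b) (hac : A.D a c) :
    A.add a b ≤ A.add a c ↔ b ≤ c := by
  refine ⟨fun h => ?_, A.add_le_add_left hac⟩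
  have hinv := A.add_le_add_left (A.D_inv_add hab) (A.inv_antitone h)
  rwa [A.add_inv_add hac, A.add_inv_add hab, A.inv_le_inv_iff] at hinv

theorem sprod_le_left (a c : E) : A.sprod a c ≤ a := by
  rw [← A.inv_le_inv_iff, sprod, A.inv_inv]
  exact A.le_add_right (A.D_inv_left_of_le inf_le_left)

theorem inv_add_sprod (a c : E) : A.add (A.inv a) (A.sprod a c) = A.inv a ⊔ c := by
  rw [sprod, A.add_inv_add (A.D_inv_left_of_le inf_le_left), A.inv_inf, A.inv_inv]

theorem inv_le_sarrow (a b : E) : A.inv a ≤ A.sarrow a b :=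
  A.le_add_right (A.D_inv_left_of_le inf_le_left)

end LatticeEffectAlgebra

/-- (Residuation) In a lattice effect algebra the Sasaki product is a
residuated map whose residual is the Sasaki arrow. -/
theorem sprod_residuated (A : LatticeEffectAlgebra E) (a b c : E) :
    A.sprod a c ≤ b ↔ c ≤ A.sarrow a b := by
  have hprod : A.D (A.inv a) (A.sprod a c) := A.D_inv_left_of_le (A.sprod_le_left a c)
  have hinf : A.D (A.inv a) (a ⊓ b) := A.D_inv_left_of_le inf_le_left
  calc A.sprod a c ≤ b
      ↔ A.sprod a c ≤ a ⊓ b := by simp only [le_inf_iff, A.sprod_le_left, true_and]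
    _ ↔ A.add (A.inv a) (A.sprod a c) ≤ A.sarrow a b := (A.add_le_add_iff_left hprod hinf).symm
    _ ↔ A.inv a ⊔ c ≤ A.sarrow a b := by rw [A.inv_add_sprod]
    _ ↔ c ≤ A.sarrow a b := by simp only [sup_le_iff, A.inv_le_sarrow, true_and]
end

section
/- (Divisibility law) In a lattice effect algebra E, for all a,b,c ∈ E: if c ≤ a and c ≤ b, then c ≤ a⊗(a→ₛb). -/
variable {E : Type*} [Lattice E] [BoundedOrder E]

namespace LatticeEffectAlgebra

/-- The difference `a ⊖ m = (a' ⊕ m)'`, the element `d` with `m ⊕ d = a`. It is only meaningful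
for `m ≤ a`, where `a' ⊕ m` is defined. -/
def diff (A : LatticeEffectAlgebra E) (a m : E) : E :=
  A.inv (A.add (A.inv a) m)

variable (A : LatticeEffectAlgebra E)

theorem D_inv_left (a : E) : A.D (A.inv a) a :=
  (A.comm a (A.inv a) (A.D_inv a)).1

theorem inv_add (a : E) : A.add (A.inv a) a = ⊤ :=
  (A.comm a (A.inv a) (A.D_inv a)).2.symm.trans (A.add_inv a)

variable {A}

theorem diff_eq_of_add_eq {a m d : E} (hD : A.D m d) (hadd : A.add m d = a) :
    A.diff a m = d := by
  subst hadd
  obtain ⟨-, hD', hassoc⟩ := A.assoc _ m d hD (A.D_inv_left (A.add m d))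
  have htop : A.add (A.add (A.inv (A.add m d)) m) d = ⊤ :=
    hassoc.symm.trans (A.inv_add (A.add m d))
  exact (A.inv_unique _ d hD' htop).symm

theorem D_diff_and_diff_add {a m : E} (h : m ≤ a) :
    A.D (A.diff a m) m ∧ A.add (A.diff a m) m = a := by
  obtain ⟨d, hD, hadd⟩ := (A.le_iff m a).1 h
  obtain ⟨hD', hcomm⟩ := A.comm m d hD
  rw [diff_eq_of_add_eq hD hadd]
  exact ⟨hD', hcomm.symm.trans hadd⟩

theorem diff_le {a m : E} (h : m ≤ a) : A.diff a m ≤ a :=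
  (A.le_iff _ a).2 ⟨m, D_diff_and_diff_add h⟩

theorem diff_diff {a m : E} (h : m ≤ a) : A.diff a (A.diff a m) = m :=
  diff_eq_of_add_eq (D_diff_and_diff_add h).1 (D_diff_and_diff_add h).2

variable (A)

/-- Both Sasaki operations are differences: `(a →ₛ b)' = a ⊖ (a ∧ b)` and `a ⊗ x = a ⊖ (a ∧ x')`.
Hence the left-hand side is `a ⊖ (a ⊖ (a ∧ b))`. -/
theorem sprod_sarrow (a b : E) : A.sprod a (A.sarrow a b) = a ⊓ b :=
  calc
    A.sprod a (A.sarrow a b) = A.diff a (a ⊓ A.diff a (a ⊓ b)) := rfl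
    _ = A.diff a (A.diff a (a ⊓ b)) := by rw [inf_eq_right.2 (diff_le inf_le_left)]
    _ = a ⊓ b := diff_diff inf_le_left

end LatticeEffectAlgebra

/-- (Divisibility law) In a lattice effect algebra, if c ≤ a and c ≤ b then
c ≤ a⊗(a→ₛb). -/
theorem divisibility (A : LatticeEffectAlgebra E) (a b c : E)
    (h1 : c ≤ a) (h2 : c ≤ b) : c ≤ A.sprod a (A.sarrow a b) := by
  rw [A.sprod_sarrow]
  exact le_inf h1 h2
end
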